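/- arXiv:2512.13811 — 2 statements merged into one kernel-verified Lean document; each statement's English description precedes it below -/
import Mathlib

section
/- Let n ≥ 5 be an integer, ξ ∈ ℝⁿ and ε > 0. For every k ∈ {0, 1, …, n}, the product φ_{(ξ,ε,k)} · w_{(ξ,ε)} is integrable on ℝⁿ and ∫_{ℝⁿ} φ_{(ξ,ε,k)}(x) · w_{(ξ,ε)}(x) dx = 0. -/
open MeasureTheory

/-- `ℝⁿ` as a Euclidean space. -/
abbrev En (n : ℕ) := EuclideanSpace ℝ (Fin n)

/-- The standard bubble `w_{(ξ,λ)}(x) = (2λ/(λ² + |x−ξ|²))^{(n−4)/2}`. -/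
noncomputable def bubble (n : ℕ) (ξ : En n) (l : ℝ) (x : En n) : ℝ :=
  (2 * l / (l ^ 2 + ‖x - ξ‖ ^ 2)) ^ (((n : ℝ) - 4) / 2)

/-- `φ_{(ξ,ε,0)}(x) = (2ε/(ε²+|x−ξ|²))^{(n+4)/2} · (|x−ξ|²−ε²)/(|x−ξ|²+ε²)`. -/
noncomputable def phi0 (n : ℕ) (ξ : En n) (ε : ℝ) (x : En n) : ℝ :=
  (2 * ε / (ε ^ 2 + ‖x - ξ‖ ^ 2)) ^ (((n : ℝ) + 4) / 2) *
    ((‖x - ξ‖ ^ 2 - ε ^ 2) / (‖x - ξ‖ ^ 2 + ε ^ 2))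

/-- `φ_{(ξ,ε,k)}(x) = (2ε/(ε²+|x−ξ|²))^{(n+4)/2} · 2ε(x_k−ξ_k)/(|x−ξ|²+ε²)`, for `k = 1,…,n`. -/
noncomputable def phiK (n : ℕ) (ξ : En n) (ε : ℝ) (k : Fin n) (x : En n) : ℝ :=
  (2 * ε / (ε ^ 2 + ‖x - ξ‖ ^ 2)) ^ (((n : ℝ) + 4) / 2) *
    (2 * ε * (x k - ξ k) / (‖x - ξ‖ ^ 2 + ε ^ 2))

/-!
Since `(n + 4) / 2 + (n - 4) / 2 = n`, each product `φ_k w` is the density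
`(2ε / (ε² + |x - ξ|²)) ^ n` of the round measure of the sphere in stereographic coordinates,
times a coordinate function of the sphere, so its integral vanishes by symmetry. For `k ≥ 1` the
symmetry is `x - ξ ↦ ξ - x`. For `k = 0`, in polar coordinates the integrand is
`r ^ (n - 1) ρ(r) ^ n h(r)` with `ρ(r) = 2ε / (ε² + r²)` and `h(r) = (r² - ε²) / (r² + ε²)`, and
`d(r ρ)/dr = -ρ h` exhibits `-(r ρ) ^ n / n`, which vanishes at `0` and at `∞`, as a primitive.
-/

open Filter Module Set
open scoped Topology

/-- The conformal factor `ρ(r) = 2ε / (ε² + r²)`, at distance `r` from the origin, of the inverse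
stereographic projection of scale `ε`. Bubbles are its powers. -/
noncomputable def conformalFactor (ε r : ℝ) : ℝ :=
  2 * ε / (ε ^ 2 + r ^ 2)

/-- The height on the unit sphere, that is its coordinate along the axis of projection, of the
inverse stereographic projection of scale `ε` of a point at distance `r` from the origin. -/
noncomputable def stereoHeight (ε r : ℝ) : ℝ :=
  (r ^ 2 - ε ^ 2) / (r ^ 2 + ε ^ 2)

section Radial

variable {ε : ℝ}

lemma conformalFactor_pos (hε : 0 < ε) (r : ℝ) : 0 < conformalFactor ε r := by
  unfold conformalFactor
  positivity

lemma continuous_conformalFactor (hε : ε ≠ 0) : Continuous (conformalFactor ε) := by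
  unfold conformalFactor
  exact continuous_const.div (by fun_prop) fun r => by positivity

lemma continuous_stereoHeight (hε : ε ≠ 0) : Continuous (stereoHeight ε) := by
  unfold stereoHeight
  exact Continuous.div (by fun_prop) (by fun_prop) fun r => by positivity

lemma abs_stereoHeight_le_one (ε r : ℝ) : |stereoHeight ε r| ≤ 1 := by
  rw [stereoHeight, abs_div, abs_of_nonneg (by positivity : 0 ≤ r ^ 2 + ε ^ 2)]
  exact div_le_one_of_le₀ (abs_le.2 ⟨by linarith [sq_nonneg r], by linarith [sq_nonneg ε]⟩)
    (by positivity)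

lemma mul_conformalFactor_le_one (ε r : ℝ) : r * conformalFactor ε r ≤ 1 := by
  rw [conformalFactor, mul_div_assoc']
  exact div_le_one_of_le₀ (by linarith [sq_nonneg (r - ε)]) (by positivity)

lemma conformalFactor_le_mul_inv_one_add_sq (hε : 0 < ε) (r : ℝ) :
    conformalFactor ε r ≤ (2 * ε + 2 / ε) * (1 + r ^ 2)⁻¹ := by
  rw [conformalFactor, ← div_eq_mul_inv, div_le_div_iff₀ (by positivity) (by positivity)]
  calc 2 * ε * (1 + r ^ 2)
      ≤ 2 * ε * (1 + r ^ 2) + (2 * ε ^ 3 + 2 / ε * r ^ 2) :=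
        le_add_of_nonneg_right (by positivity)
    _ = (2 * ε + 2 / ε) * (ε ^ 2 + r ^ 2) := by field

lemma hasDerivAt_mul_conformalFactor (hε : ε ≠ 0) (r : ℝ) :
    HasDerivAt (fun t => t * conformalFactor ε t)
      (-(conformalFactor ε r * stereoHeight ε r)) r := by
  have hden : ε ^ 2 + r ^ 2 ≠ 0 := by positivity
  have hden_deriv : HasDerivAt (fun t : ℝ => ε ^ 2 + t ^ 2) (2 * r) r := by
    simpa using (hasDerivAt_pow 2 r).const_add (ε ^ 2)
  refine ((hasDerivAt_id' r).fun_mul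
    ((hasDerivAt_const r (2 * ε)).fun_div hden_deriv hden)).congr_deriv ?_
  rw [conformalFactor, stereoHeight, add_comm (r ^ 2)]
  field

lemma hasDerivAt_mul_conformalFactor_pow (hε : ε ≠ 0) (m : ℕ) (r : ℝ) :
    HasDerivAt (fun t => (t * conformalFactor ε t) ^ m)
      (-m * (r ^ (m - 1) * (conformalFactor ε r ^ m * stereoHeight ε r))) r := by
  refine ((hasDerivAt_mul_conformalFactor hε r).fun_pow m).congr_deriv ?_
  rcases m with _ | m
  · simp
  · rw [Nat.add_sub_cancel]
    ring

lemma tendsto_mul_conformalFactor_atTop (hε : 0 < ε) :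
    Tendsto (fun r => r * conformalFactor ε r) atTop (𝓝 0) := by
  have hlim : Tendsto (fun r : ℝ => 2 * ε * r⁻¹) atTop (𝓝 0) := by
    simpa using tendsto_inv_atTop_zero.const_mul (2 * ε)
  refine squeeze_zero' ?_ ?_ hlim <;> filter_upwards [eventually_gt_atTop 0] with r hr
  · exact mul_nonneg hr.le (conformalFactor_pos hε r).le
  · calc r * conformalFactor ε r
        ≤ r * (2 * ε / r ^ 2) := by
          unfold conformalFactor
          gcongr
          exact le_add_of_nonneg_left (sq_nonneg ε)
      _ = 2 * ε * r⁻¹ := by field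

end Radial

lemma integral_eq_zero_of_odd {G F : Type*} [MeasurableSpace G] [AddGroup G] [MeasurableNeg G]
    [NormedAddCommGroup F] [NormedSpace ℝ F] (μ : Measure G) [μ.IsNegInvariant] {f : G → F}
    (hf : f.Odd) : ∫ x, f x ∂μ = 0 := by
  have : IsAddTorsionFree F := .of_isTorsionFree ℝ F
  rw [← self_eq_neg]
  calc ∫ x, f x ∂μ = ∫ x, f (-x) ∂μ := (integral_neg_eq_self f μ).symm
    _ = -∫ x, f x ∂μ := by simp only [hf _, integral_neg]

section Normed

variable {E : Type*} [NormedAddCommGroup E] [NormedSpace ℝ E] {ε : ℝ}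

lemma abs_conformalFactor_norm_mul_clm_le (hε : 0 < ε) (L : E →L[ℝ] ℝ) (x : E) :
    |conformalFactor ε ‖x‖ * L x| ≤ ‖L‖ := by
  have hρ := conformalFactor_pos hε ‖x‖
  calc |conformalFactor ε ‖x‖ * L x|
      = conformalFactor ε ‖x‖ * ‖L x‖ := by rw [abs_mul, abs_of_pos hρ, Real.norm_eq_abs]
    _ ≤ conformalFactor ε ‖x‖ * (‖L‖ * ‖x‖) := by
        gcongr
        exact L.le_opNorm x
    _ = ‖L‖ * (‖x‖ * conformalFactor ε ‖x‖) := by ring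
    _ ≤ ‖L‖ := mul_le_of_le_one_right (norm_nonneg L) (mul_conformalFactor_le_one ε ‖x‖)

lemma integral_conformalFactor_pow_mul_clm_eq_zero [MeasurableSpace E] [MeasurableNeg E]
    (μ : Measure E) [μ.IsNegInvariant] (ε : ℝ) (m : ℕ) (L : E →L[ℝ] ℝ) :
    ∫ x, conformalFactor ε ‖x‖ ^ m * (conformalFactor ε ‖x‖ * L x) ∂μ = 0 :=
  integral_eq_zero_of_odd μ fun x => by simp only [norm_neg, map_neg, mul_neg]

end Normed

section Haar

variable {E : Type*} [NormedAddCommGroup E] [NormedSpace ℝ E] [FiniteDimensional ℝ E]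
  [MeasurableSpace E] [BorelSpace E] (μ : Measure E) [μ.IsAddHaarMeasure] {ε : ℝ}

lemma integrable_conformalFactor_norm_rpow (hε : 0 < ε) {s : ℝ} (hs : finrank ℝ E < 2 * s) :
    Integrable (fun x : E => conformalFactor ε ‖x‖ ^ s) μ := by
  have hs₀ : 0 ≤ s := by linarith [(finrank ℝ E).cast_nonneg (α := ℝ)]
  have hcont : Continuous fun x : E => conformalFactor ε ‖x‖ ^ s :=
    ((continuous_conformalFactor hε.ne').comp continuous_norm).rpow_const fun _ => .inr hs₀
  refine ((integrable_rpow_neg_one_add_norm_sq hs).const_mul ((2 * ε + 2 / ε) ^ s)).mono'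
    hcont.aestronglyMeasurable (.of_forall fun x => ?_)
  have hρ := (conformalFactor_pos hε ‖x‖).le
  calc ‖conformalFactor ε ‖x‖ ^ s‖
      = conformalFactor ε ‖x‖ ^ s := Real.norm_of_nonneg (by positivity)
    _ ≤ ((2 * ε + 2 / ε) * (1 + ‖x‖ ^ 2)⁻¹) ^ s := by
        gcongr
        exact conformalFactor_le_mul_inv_one_add_sq hε ‖x‖
    _ = (2 * ε + 2 / ε) ^ s * (1 + ‖x‖ ^ 2) ^ (-(2 * s) / 2) := by
        rw [Real.mul_rpow (by positivity) (by positivity), Real.inv_rpow (by positivity),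
          ← Real.rpow_neg (by positivity), neg_div, mul_div_cancel_left₀ s two_ne_zero]

lemma integrable_conformalFactor_norm_pow (hε : 0 < ε) {m : ℕ} (hm : finrank ℝ E < 2 * m) :
    Integrable (fun x : E => conformalFactor ε ‖x‖ ^ m) μ := by
  simpa only [Real.rpow_natCast] using
    integrable_conformalFactor_norm_rpow μ hε (s := m) (mod_cast hm)

lemma integrable_conformalFactor_pow_mul_stereoHeight (hε : 0 < ε) {m : ℕ}
    (hm : finrank ℝ E < 2 * m) :
    Integrable (fun x : E => conformalFactor ε ‖x‖ ^ m * stereoHeight ε ‖x‖) μ :=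
  (integrable_conformalFactor_norm_pow μ hε hm).mul_bdd
    ((continuous_stereoHeight hε.ne').comp continuous_norm).aestronglyMeasurable
    (.of_forall fun x => abs_stereoHeight_le_one ε ‖x‖)

lemma integrable_conformalFactor_pow_mul_clm (hε : 0 < ε) {m : ℕ} (hm : finrank ℝ E < 2 * m)
    (L : E →L[ℝ] ℝ) :
    Integrable (fun x => conformalFactor ε ‖x‖ ^ m * (conformalFactor ε ‖x‖ * L x)) μ :=
  (integrable_conformalFactor_norm_pow μ hε hm).mul_bdd
    (((continuous_conformalFactor hε.ne').comp continuous_norm).mul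
      L.continuous).aestronglyMeasurable
    (.of_forall fun x => abs_conformalFactor_norm_mul_clm_le hε L x)

end Haar

section PolarCoordinates

variable {ε : ℝ}

lemma integrableOn_Ioi_pow_mul_conformalFactor_pow_mul_stereoHeight (hε : 0 < ε) {m : ℕ}
    (hm : m ≠ 0) :
    IntegrableOn (fun r => r ^ (m - 1) * (conformalFactor ε r ^ m * stereoHeight ε r))
      (Ioi 0) := by
  have : NeZero m := ⟨hm⟩
  have hdim : finrank ℝ (En m) = m := finrank_euclideanSpace_fin
  have hlt : finrank ℝ (En m) < 2 * m := by rw [hdim]; lia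
  simpa only [hdim, smul_eq_mul] using (integrable_fun_norm_addHaar volume
    (f := fun r => conformalFactor ε r ^ m * stereoHeight ε r)).1
    (integrable_conformalFactor_pow_mul_stereoHeight volume hε hlt)

lemma integral_Ioi_pow_mul_conformalFactor_pow_mul_stereoHeight_eq_zero (hε : 0 < ε) {m : ℕ}
    (hm : m ≠ 0) :
    ∫ r in Ioi 0, r ^ (m - 1) * (conformalFactor ε r ^ m * stereoHeight ε r) = 0 := by
  have hlim : Tendsto (fun r => (r * conformalFactor ε r) ^ m) atTop (𝓝 0) := by
    simpa [hm] using (tendsto_mul_conformalFactor_atTop hε).pow m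
  have hFTC := integral_Ioi_of_hasDerivAt_of_tendsto'
    (fun r _ => hasDerivAt_mul_conformalFactor_pow hε.ne' m r)
    ((integrableOn_Ioi_pow_mul_conformalFactor_pow_mul_stereoHeight hε hm).const_mul (-(m : ℝ)))
    hlim
  rw [integral_const_mul] at hFTC
  simpa [hm] using hFTC

lemma integral_conformalFactor_pow_finrank_mul_stereoHeight_eq_zero {E : Type*}
    [NormedAddCommGroup E] [NormedSpace ℝ E] [FiniteDimensional ℝ E] [Nontrivial E]
    [MeasurableSpace E] [BorelSpace E] (μ : Measure E) [μ.IsAddHaarMeasure] (hε : 0 < ε) :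
    ∫ x : E, conformalFactor ε ‖x‖ ^ finrank ℝ E * stereoHeight ε ‖x‖ ∂μ = 0 := by
  rw [integral_fun_norm_addHaar μ
    fun r => conformalFactor ε r ^ finrank ℝ E * stereoHeight ε r]
  simp only [smul_eq_mul, mul_zero, smul_zero,
    integral_Ioi_pow_mul_conformalFactor_pow_mul_stereoHeight_eq_zero hε finrank_pos.ne']

end PolarCoordinates

lemma rpow_half_add_mul_mul_rpow_half_sub {ρ : ℝ} (hρ : 0 < ρ) (n : ℕ) (a c : ℝ) :
    ρ ^ ((n + a) / 2) * c * ρ ^ ((n - a) / 2) = ρ ^ n * c := by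
  have hexp : (n + a) / 2 + (n - a) / 2 = n := by ring
  rw [mul_right_comm, ← Real.rpow_add hρ, hexp, Real.rpow_natCast]

section Euclidean

variable {n : ℕ} {ε : ℝ}

lemma phi0_mul_bubble (ξ : En n) (hε : 0 < ε) (x : En n) :
    phi0 n ξ ε x * bubble n ξ ε x =
      conformalFactor ε ‖x - ξ‖ ^ n * stereoHeight ε ‖x - ξ‖ :=
  rpow_half_add_mul_mul_rpow_half_sub (conformalFactor_pos hε ‖x - ξ‖) n 4 _

lemma phiK_mul_bubble (ξ : En n) (hε : 0 < ε) (k : Fin n) (x : En n) :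
    phiK n ξ ε k x * bubble n ξ ε x = conformalFactor ε ‖x - ξ‖ ^ n *
      (conformalFactor ε ‖x - ξ‖ * EuclideanSpace.proj (𝕜 := ℝ) k (x - ξ)) := by
  refine (rpow_half_add_mul_mul_rpow_half_sub (conformalFactor_pos hε ‖x - ξ‖) n 4 _).trans ?_
  rw [add_comm (‖x - ξ‖ ^ 2), mul_div_right_comm]
  rfl

end Euclidean

theorem phi_orthogonal_bubble_general (n : ℕ) (hn : n ≠ 0)
    (ξ : En n) (ε : ℝ) (hε : 0 < ε) :
    (Integrable (fun x : En n => phi0 n ξ ε x * bubble n ξ ε x) ∧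
      ∫ x : En n, phi0 n ξ ε x * bubble n ξ ε x = 0) ∧
    (∀ k : Fin n,
      Integrable (fun x : En n => phiK n ξ ε k x * bubble n ξ ε x) ∧
      ∫ x : En n, phiK n ξ ε k x * bubble n ξ ε x = 0) := by
  have : NeZero n := ⟨hn⟩
  have hdim : finrank ℝ (En n) = n := finrank_euclideanSpace_fin
  have hlt : finrank ℝ (En n) < 2 * n := by rw [hdim]; lia
  simp only [phi0_mul_bubble ξ hε, phiK_mul_bubble ξ hε]
  refine ⟨⟨?_, ?_⟩, fun k => ⟨?_, ?_⟩⟩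
  · exact (integrable_conformalFactor_pow_mul_stereoHeight volume hε hlt).comp_sub_right ξ
  · rw [integral_sub_right_eq_self
      (fun x : En n => conformalFactor ε ‖x‖ ^ n * stereoHeight ε ‖x‖) ξ]
    simpa only [hdim] using
      integral_conformalFactor_pow_finrank_mul_stereoHeight_eq_zero (volume : Measure (En n)) hε
  · exact (integrable_conformalFactor_pow_mul_clm volume hε hlt
      (EuclideanSpace.proj k)).comp_sub_right ξ
  · rw [integral_sub_right_eq_self (fun x : En n => conformalFactor ε ‖x‖ ^ n *
      (conformalFactor ε ‖x‖ * EuclideanSpace.proj (𝕜 := ℝ) k x)) ξ]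
    exact integral_conformalFactor_pow_mul_clm_eq_zero volume ε n (EuclideanSpace.proj k)

/-- For every `k ∈ {0,1,…,n}`, the product `φ_{(ξ,ε,k)} · w_{(ξ,ε)}` is integrable on `ℝⁿ`
with vanishing integral. -/
theorem phi_orthogonal_bubble (n : ℕ) (hn : 5 ≤ n)
    (ξ : En n) (ε : ℝ) (hε : 0 < ε) :
    (Integrable (fun x : En n => phi0 n ξ ε x * bubble n ξ ε x) ∧
      ∫ x : En n, phi0 n ξ ε x * bubble n ξ ε x = 0) ∧
    (∀ k : Fin n,
      Integrable (fun x : En n => phiK n ξ ε k x * bubble n ξ ε x) ∧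
      ∫ x : En n, phiK n ξ ε k x * bubble n ξ ε x = 0) :=
  phi_orthogonal_bubble_general n (by lia) ξ ε hε
end

section
/- Let n ≥ 12 be an integer. There exists a constant C(n) > 0 such that for every real number a ≥ 0 and every real number u: | |u|^{2n/(n−4)} − a^{2n/(n−4)} − (n/4) · (|u|^{8/(n−4)} − a^{8/(n−4)}) · u · a | ≤ C(n) · |u − a|^{2n/(n−4)}. -/
/-!
Put `q = 8 / (n - 4) ∈ (0, 1]`, so that `2n / (n - 4) = q + 2` and `n / 4 = (q + 2) / q`. After
multiplication by `q`, the quantity to bound is homogeneous of degree `q + 2` and antisymmetric in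
`(a, u)`, so it suffices to bound it by `(1 - s) ^ (q + 2)` at `a = 1`, `u = s ∈ [-1, 1]`.

For `s ≥ 0` its derivative is `q + 2` times `q * s ^ (q + 1) - (q + 1) * s ^ q + 1`, which lies
between `0` (AM-GM) and `(1 - s) ^ 2` (Bernoulli). Integrating from `s` to `1` gives the bound
`(q + 2) / 3 * (1 - s) ^ 3 ≤ (1 - s) ^ (q + 2)`. For `s ≤ 0` there is no cancellation and the bound
is Bernoulli's inequality for `(1 + |s|) ^ (q + 2)`.
-/

open Set

/-- The expression `|u| ^ (q + 2) - |a| ^ (q + 2) - (q + 2) / q * (|u| ^ q - |a| ^ q) * u * a`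
multiplied by `q`. Clearing the denominator makes it antisymmetric in `(a, u)` and makes sense
of `q = 0`. -/
noncomputable def powerDefect (q a u : ℝ) : ℝ :=
  q * (|u| ^ (q + 2) - |a| ^ (q + 2)) - (q + 2) * (|u| ^ q - |a| ^ q) * u * a

section

variable {q s : ℝ}

lemma powerDefect_self (q a : ℝ) : powerDefect q a a = 0 := by
  simp [powerDefect]

lemma powerDefect_swap (q a u : ℝ) : powerDefect q u a = -powerDefect q a u := by
  unfold powerDefect
  ring

lemma powerDefect_mul_mul (hq : 0 ≤ q) (c a u : ℝ) :
    powerDefect q (c * a) (c * u) = |c| ^ (q + 2) * powerDefect q a u := by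
  have rpow_add_two : |c| ^ (q + 2) = |c| ^ q * c ^ 2 := by
    rw [Real.rpow_add_of_nonneg (abs_nonneg c) hq zero_le_two, Real.rpow_two, sq_abs]
  simp only [powerDefect, abs_mul, Real.mul_rpow (abs_nonneg c) (abs_nonneg _), rpow_add_two]
  ring

lemma powerDefect_one_of_nonneg (hq : 0 ≤ q) (hs : 0 ≤ s) :
    powerDefect q 1 s = q * (s ^ (q + 2) - 1) - (q + 2) * (s ^ (q + 1) - s) := by
  rw [powerDefect, abs_of_nonneg hs, abs_one, Real.one_rpow, Real.one_rpow,
    Real.rpow_add_one' hs (by positivity)]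
  ring

lemma add_one_mul_rpow_le (hq : 0 ≤ q) (hs : 0 ≤ s) :
    (q + 1) * s ^ q ≤ q * s ^ (q + 1) + 1 := by
  have am_gm : (s ^ (q + 1)) ^ (q / (q + 1)) * 1 ^ (1 / (q + 1)) ≤
      q / (q + 1) * s ^ (q + 1) + 1 / (q + 1) * 1 :=
    Real.geom_mean_le_arith_mean2_weighted (by positivity) (by positivity) (by positivity)
      zero_le_one (by field_simp)
  rw [← Real.rpow_mul hs, mul_div_cancel₀ q (by positivity), Real.one_rpow, mul_one] at am_gm
  calc (q + 1) * s ^ q ≤ (q + 1) * (q / (q + 1) * s ^ (q + 1) + 1 / (q + 1) * 1) := by gcongr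
    _ = q * s ^ (q + 1) + 1 := by field_simp

lemma mul_rpow_add_one_sub_le_sq (hq₀ : 0 ≤ q) (hq₁ : q ≤ 1) (hs₀ : 0 ≤ s) (hs₂ : s ≤ 2) :
    q * s ^ (q + 1) - (q + 1) * s ^ q + 1 ≤ (1 - s) ^ 2 := by
  have bernoulli : s ^ (1 - q) ≤ 1 + (1 - q) * (s - 1) := by
    simpa using rpow_one_add_le_one_add_mul_self (s := s - 1) (p := 1 - q)
      (by linarith) (by linarith) (by linarith)
  have cofactor_le : s ^ (1 - q) * (2 - s) ≤ 1 + q * (1 - s) :=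
    calc s ^ (1 - q) * (2 - s) ≤ (1 + (1 - q) * (s - 1)) * (2 - s) := by gcongr
      _ = 1 + q * (1 - s) - (1 - q) * (1 - s) ^ 2 := by ring
      _ ≤ 1 + q * (1 - s) := sub_le_self _ (mul_nonneg (by linarith) (sq_nonneg _))
  have split_s : s ^ q * s ^ (1 - q) = s := by
    rw [← Real.rpow_add_of_nonneg hs₀ hq₀ (by linarith), add_sub_cancel, Real.rpow_one]
  have key : s * (2 - s) ≤ s ^ q * (1 + q * (1 - s)) :=
    calc s * (2 - s) = s ^ q * (s ^ (1 - q) * (2 - s)) := by rw [← mul_assoc, split_s]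
      _ ≤ s ^ q * (1 + q * (1 - s)) := by gcongr
  rw [Real.rpow_add_one' hs₀ (by positivity)]
  linarith

lemma hasDerivAt_powerDefect_one (hq : 0 ≤ q) (hs : 0 < s) :
    HasDerivAt (powerDefect q 1) ((q + 2) * (q * s ^ (q + 1) - (q + 1) * s ^ q + 1)) s := by
  have deriv_rpow (p : ℝ) := Real.hasDerivAt_rpow_const (p := p) (Or.inl hs.ne')
  have deriv_formula := (((deriv_rpow (q + 2)).sub_const 1).const_mul q).sub
    (((deriv_rpow (q + 1)).sub (hasDerivAt_id s)).const_mul (q + 2))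
  refine (deriv_formula.congr_of_eventuallyEq ?_).congr_deriv ?_
  · filter_upwards [lt_mem_nhds hs] with x hx
    exact powerDefect_one_of_nonneg hq hx.le
  · rw [show q + 2 - 1 = q + 1 by ring, add_sub_cancel_right]
    ring

lemma continuous_powerDefect (hq : 0 ≤ q) (a : ℝ) : Continuous (powerDefect q a) := by
  have continuous_abs_rpow {p : ℝ} (hp : 0 ≤ p) : Continuous fun x : ℝ ↦ |x| ^ p :=
    continuous_abs.rpow_const fun _ ↦ Or.inr hp
  have := continuous_abs_rpow hq
  have := continuous_abs_rpow (p := q + 2) (by positivity)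
  unfold powerDefect
  fun_prop

lemma powerDefect_one_nonpos (hq : 0 ≤ q) (hs : s ∈ Icc 0 1) : powerDefect q 1 s ≤ 0 := by
  have mono : MonotoneOn (powerDefect q 1) (Icc 0 1) := by
    refine monotoneOn_of_hasDerivWithinAt_nonneg (convex_Icc 0 1)
      (continuous_powerDefect hq 1).continuousOn
      (fun x hx ↦ (hasDerivAt_powerDefect_one hq ?_).hasDerivWithinAt) fun x hx ↦ ?_
    all_goals rw [interior_Icc] at hx
    · exact hx.1
    · exact mul_nonneg (by positivity) (by linarith [add_one_mul_rpow_le hq hx.1.le])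
  simpa only [powerDefect_self] using mono hs (right_mem_Icc.2 zero_le_one) hs.2

lemma neg_powerDefect_one_le_cube (hq₀ : 0 ≤ q) (hq₁ : q ≤ 1) (hs : s ∈ Icc 0 1) :
    -powerDefect q 1 s ≤ (q + 2) / 3 * (1 - s) ^ 3 := by
  have anti : AntitoneOn (fun x ↦ powerDefect q 1 x + (q + 2) / 3 * (1 - x) ^ 3) (Icc 0 1) := by
    have deriv_cube (x : ℝ) := (((hasDerivAt_id x).const_sub 1).pow 3).const_mul ((q + 2) / 3)
    have := continuous_powerDefect hq₀ 1
    refine antitoneOn_of_hasDerivWithinAt_nonpos (convex_Icc 0 1) (by fun_prop)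
      (fun x hx ↦ ((hasDerivAt_powerDefect_one hq₀ ?_).add (deriv_cube x)).hasDerivWithinAt)
      fun x hx ↦ ?_
    all_goals rw [interior_Icc] at hx
    · exact hx.1
    · have bound := mul_rpow_add_one_sub_le_sq hq₀ hq₁ hx.1.le (by linarith [hx.2])
      have := mul_le_mul_of_nonneg_left bound (by positivity : 0 ≤ q + 2)
      simp only [id_eq]
      push_cast
      linarith
  have := anti hs (right_mem_Icc.2 zero_le_one) hs.2
  simp only [powerDefect_self, sub_self] at this
  linarith

lemma abs_powerDefect_one_le_of_nonneg (hq₀ : 0 ≤ q) (hq₁ : q ≤ 1) (hs : s ∈ Icc 0 1) :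
    |powerDefect q 1 s| ≤ (1 - s) ^ (q + 2) := by
  have hs' : 0 ≤ 1 - s := sub_nonneg.2 hs.2
  calc |powerDefect q 1 s| = -powerDefect q 1 s := abs_of_nonpos (powerDefect_one_nonpos hq₀ hs)
    _ ≤ (q + 2) / 3 * (1 - s) ^ 3 := neg_powerDefect_one_le_cube hq₀ hq₁ hs
    _ ≤ 1 * (1 - s) ^ 3 := by gcongr; linarith
    _ = (1 - s) ^ (3 : ℝ) := by rw [one_mul]; norm_cast
    _ ≤ (1 - s) ^ (q + 2) :=
      Real.rpow_le_rpow_of_exponent_ge_of_imp hs' (by linarith [hs.1]) (by linarith)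
        fun _ h ↦ by linarith

lemma abs_powerDefect_one_neg_le (hq₀ : 0 ≤ q) (hq₁ : q ≤ 1) (hs : s ∈ Icc 0 1) :
    |powerDefect q 1 (-s)| ≤ (1 + s) ^ (q + 2) := by
  have formula : -powerDefect q 1 (-s) = q * (1 - s ^ (q + 2)) + (q + 2) * (1 - s ^ q) * s := by
    rw [powerDefect, abs_neg, abs_of_nonneg hs.1, abs_one, Real.one_rpow, Real.one_rpow]
    ring
  have rpow_nonneg (p : ℝ) : 0 ≤ s ^ p := Real.rpow_nonneg hs.1 p
  have one_sub_rpow_nonneg {p : ℝ} (hp : 0 ≤ p) : 0 ≤ 1 - s ^ p :=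
    sub_nonneg.2 (Real.rpow_le_one hs.1 hs.2 hp)
  have nonneg : 0 ≤ -powerDefect q 1 (-s) := by
    rw [formula]
    exact add_nonneg (mul_nonneg hq₀ (one_sub_rpow_nonneg (by positivity)))
      (mul_nonneg (mul_nonneg (by positivity) (one_sub_rpow_nonneg hq₀)) hs.1)
  calc |powerDefect q 1 (-s)|
      = q * (1 - s ^ (q + 2)) + (q + 2) * (1 - s ^ q) * s := by
        rw [← abs_neg, abs_of_nonneg nonneg, formula]
    _ ≤ q * 1 + (q + 2) * 1 * s := by
        have := hs.1
        gcongr <;> exact sub_le_self _ (rpow_nonneg _)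
    _ ≤ 1 + (q + 2) * s := by linarith
    _ ≤ (1 + s) ^ (q + 2) :=
        one_add_mul_self_le_rpow_one_add (by linarith [hs.1]) (by linarith)

lemma abs_powerDefect_one_le (hq₀ : 0 ≤ q) (hq₁ : q ≤ 1) (hs : |s| ≤ 1) :
    |powerDefect q 1 s| ≤ |s - 1| ^ (q + 2) := by
  obtain ⟨neg_one_le, le_one⟩ := abs_le.1 hs
  rw [abs_sub_comm, abs_of_nonneg (sub_nonneg.2 le_one)]
  rcases le_total 0 s with nonneg | nonpos
  · exact abs_powerDefect_one_le_of_nonneg hq₀ hq₁ ⟨nonneg, le_one⟩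
  · have bound := abs_powerDefect_one_neg_le (s := -s) hq₀ hq₁ ⟨by linarith, by linarith⟩
    rwa [neg_neg, ← sub_eq_add_neg] at bound

theorem abs_powerDefect_le (hq₀ : 0 ≤ q) (hq₁ : q ≤ 1) (a u : ℝ) :
    |powerDefect q a u| ≤ |u - a| ^ (q + 2) := by
  wlog hua : |u| ≤ |a| generalizing a u
  · rw [powerDefect_swap, abs_neg, abs_sub_comm]
    exact this u a (le_of_not_ge hua)
  rcases eq_or_ne a 0 with rfl | ha
  · obtain rfl : u = 0 := by simpa using hua
    rw [powerDefect_self, abs_zero]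
    positivity
  · obtain ⟨s, rfl⟩ : ∃ s, u = a * s := ⟨u / a, (mul_div_cancel₀ u ha).symm⟩
    have hs : |s| ≤ 1 := by
      rwa [abs_mul, mul_le_iff_le_one_right (abs_pos.2 ha)] at hua
    calc |powerDefect q a (a * s)| = |a| ^ (q + 2) * |powerDefect q 1 s| := by
          have homogeneity := powerDefect_mul_mul hq₀ a 1 s
          rw [mul_one] at homogeneity
          rw [homogeneity, abs_mul, abs_of_nonneg (by positivity)]
      _ ≤ |a| ^ (q + 2) * |s - 1| ^ (q + 2) := by
          gcongr
          exact abs_powerDefect_one_le hq₀ hq₁ hs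
      _ = |a * s - a| ^ (q + 2) := by
          rw [← Real.mul_rpow (abs_nonneg _) (abs_nonneg _), ← abs_mul, mul_sub_one]

end

theorem power_difference_estimate_general {ν : ℝ} (hν : 12 ≤ ν) (a u : ℝ) :
    |(|u| ^ (2 * ν / (ν - 4)) - |a| ^ (2 * ν / (ν - 4)) -
        ν / 4 * (|u| ^ (8 / (ν - 4)) - |a| ^ (8 / (ν - 4))) * u * a)|
      ≤ (ν - 4) / 8 * |u - a| ^ (2 * ν / (ν - 4)) := by
  have hν₄ : 0 < ν - 4 := by linarith
  have exponent_eq : 2 * ν / (ν - 4) = 8 / (ν - 4) + 2 := by field_simp; ring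
  have defect_eq : |u| ^ (2 * ν / (ν - 4)) - |a| ^ (2 * ν / (ν - 4)) -
        ν / 4 * (|u| ^ (8 / (ν - 4)) - |a| ^ (8 / (ν - 4))) * u * a =
      (ν - 4) / 8 * powerDefect (8 / (ν - 4)) a u := by
    rw [powerDefect, ← exponent_eq]
    field_simp
    ring
  rw [defect_eq, abs_mul, abs_of_pos (by positivity), exponent_eq]
  gcongr
  exact abs_powerDefect_le (by positivity) ((div_le_one hν₄).2 (by linarith)) a u

/-- Elementary pointwise estimate comparing `|u|^{2n/(n−4)}` with `a^{2n/(n−4)}`. -/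
theorem power_difference_estimate (n : ℕ) (hn : 12 ≤ n) :
    ∃ C : ℝ, 0 < C ∧
      ∀ a u : ℝ, 0 ≤ a →
        |(|u| ^ (2 * (n : ℝ) / ((n : ℝ) - 4)) - a ^ (2 * (n : ℝ) / ((n : ℝ) - 4)) -
            (n : ℝ) / 4 * (|u| ^ ((8 : ℝ) / ((n : ℝ) - 4)) - a ^ ((8 : ℝ) / ((n : ℝ) - 4))) *
              u * a)|
          ≤ C * |u - a| ^ (2 * (n : ℝ) / ((n : ℝ) - 4)) := by
  have hn' : (12 : ℝ) ≤ n := by exact_mod_cast hn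
  exact ⟨(n - 4) / 8, by linarith, fun a u ha ↦ by
    simpa only [abs_of_nonneg ha] using power_difference_estimate_general hn' a u⟩
end
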